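/- Let M₀, M₁, …, M_m be a finite sequence of ε-NFAs over Σ (on a common state type) such that for each i < m, M_{i+1} extends M_i by bypass ε-edges. Then for every word α accepted by M_m there exists a word α' accepted by M₀ such that α' R* α. (This is the paper's Corollary to Lemma 1, proved by induction on m.) -/

import Mathlib

/-- The four-element alphabet: selectors `c0`, `c1` and barred symbols `b0, b1`. -/
inductive ASym : Type
  | c0 | c1 | b0 | b1
  deriving DecidableEq

open ASym

/-- One-step cancellation relation on words: `𝟬̄𝟬 → ε` and `𝟭̄𝟭 → ε`. -/
def Cancel (w w' : List ASym) : Prop :=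
  ∃ u v : List ASym,
    (w = u ++ [b0, c0] ++ v ∧ w' = u ++ v) ∨
    (w = u ++ [b1, c1] ++ v ∧ w' = u ++ v)

/-- `(q', q'')` is a bypass pair in `M`. -/
def BypassPair {σ : Type*} (M : εNFA ASym σ) (q' q'' : σ) : Prop :=
  ∃ q : σ,
    (q ∈ M.step q' (some b0) ∧ q'' ∈ M.step q (some c0)) ∨
    (q ∈ M.step q' (some b1) ∧ q'' ∈ M.step q (some c1))

/-- `M'` extends `M` by bypass ε-edges. -/
def ExtendsByBypass {σ : Type*} (M M' : εNFA ASym σ) : Prop :=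
  M'.start = M.start ∧ M'.accept = M.accept ∧
  (∀ q a, M'.step q (some a) = M.step q (some a)) ∧
  (∀ q, M.step q none ⊆ M'.step q none) ∧
  (∀ q' q'', q'' ∈ M'.step q' none → q'' ∉ M.step q' none → BypassPair M q' q'')

/-- The ε-NFA obtained from `M` by adding a single ε-transition from `q'` to `q''`. -/
def addEps {σ : Type*} (M : εNFA ASym σ) (q' q'' : σ) : εNFA ASym σ where
  step := fun q a => M.step q a ∪ {p | q = q' ∧ a = none ∧ p = q''}
  start := M.start
  accept := M.accept

/-- `M` is bypass-closed: adding the ε-edge of any bypass pair does not change the language. -/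
def BypassClosed {σ : Type*} (M : εNFA ASym σ) : Prop :=
  ∀ q' q'', BypassPair M q' q'' → (addEps M q' q'').accepts = M.accepts

/-- The barred-removal of `M`: delete all edges labeled `b0` or `b1`. -/
def barredRemoval {σ : Type*} (M : εNFA ASym σ) : εNFA ASym σ where
  step := fun q a =>
    match a with
    | none => M.step q none
    | some c0 => M.step q (some c0)
    | some c1 => M.step q (some c1)
    | some b0 => ∅
    | some b1 => ∅
  start := M.start
  accept := M.accept

theorem cancel_cons (a : ASym) {w w' : List ASym} (h : Cancel w w') :
    Cancel (a :: w) (a :: w') := by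
  obtain ⟨u, v, h | h⟩ := h
  · exact ⟨a :: u, v, Or.inl (by simp [h.1, h.2])⟩
  · exact ⟨a :: u, v, Or.inr (by simp [h.1, h.2])⟩

theorem path_reduces {σ : Type*} {M M' : εNFA ASym σ} (h : ExtendsByBypass M M')
    {s t : σ} {x : List (Option ASym)} (hp : M'.IsPath s t x) :
    ∃ y, M.IsPath s t y ∧ Relation.ReflTransGen Cancel y.reduceOption x.reduceOption := by
  obtain ⟨-, -, hs, -, hb⟩ := h
  induction hp with
  | nil s => exact ⟨[], .nil s, .refl⟩
  | cons t s u a x hst _ ih =>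
    obtain ⟨y, hy, hr⟩ := ih
    cases a with
    | some a =>
      rw [hs] at hst
      refine ⟨some a :: y, .cons t s u _ _ hst hy, ?_⟩
      simp only [List.reduceOption_cons_of_some]
      exact Relation.ReflTransGen.lift (List.cons a) (fun _ _ h => cancel_cons a h) _ _ hr
    | none =>
      simp only [List.reduceOption_cons_of_none]
      by_cases hm : t ∈ M.step s none
      · exact ⟨none :: y, .cons t s u _ _ hm hy, by simpa using hr⟩
      · obtain ⟨q, h | h⟩ := hb _ _ hst hm
        · refine ⟨some b0 :: some c0 :: y, .cons _ _ _ _ _ h.1 (.cons _ _ _ _ _ h.2 hy), ?_⟩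
          exact .head ⟨[], y.reduceOption, Or.inl (by simp)⟩ hr
        · refine ⟨some b1 :: some c1 :: y, .cons _ _ _ _ _ h.1 (.cons _ _ _ _ _ h.2 hy), ?_⟩
          exact .head ⟨[], y.reduceOption, Or.inr (by simp)⟩ hr

theorem accepts_extendsByBypass_reduces {σ : Type*} {M M' : εNFA ASym σ}
    (h : ExtendsByBypass M M') {α : List ASym} (hα : α ∈ M'.accepts) :
    ∃ α' ∈ M.accepts, Relation.ReflTransGen Cancel α' α := by
  rw [εNFA.mem_accepts_iff_exists_path] at hα
  obtain ⟨s, t, x, hs, ht, rfl, hp⟩ := hα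
  obtain ⟨y, hy, hr⟩ := path_reduces h hp
  refine ⟨y.reduceOption, ?_, hr⟩
  rw [εNFA.mem_accepts_iff_exists_path]
  exact ⟨s, t, y, h.1 ▸ hs, h.2.1 ▸ ht, rfl, hy⟩

/-- Corollary of Lemma 1: along a chain of bypass extensions, every accepted word of the
last automaton is a reduct of a word accepted by the first. -/
theorem accepts_chain_extendsByBypass_reduces {σ : Type*} (m : ℕ) (M : ℕ → εNFA ASym σ)
    (h : ∀ i < m, ExtendsByBypass (M i) (M (i + 1)))
    (α : List ASym) (hα : α ∈ (M m).accepts) :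
    ∃ α' ∈ (M 0).accepts, Relation.ReflTransGen Cancel α' α := by
  induction m generalizing α with
  | zero => exact ⟨α, hα, .refl⟩
  | succ m ih =>
    obtain ⟨β, hβ, hr⟩ := accepts_extendsByBypass_reduces (h m (Nat.lt_succ_self m)) hα
    obtain ⟨γ, hγ, hr'⟩ := ih (fun i hi => h i (Nat.lt_succ_of_lt hi)) β hβ
    exact ⟨γ, hγ, hr'.trans hr⟩
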